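/- Let K be a finite set, let Σ be a positive definite covariance matrix indexed by K, and let G be an undirected graph over K such that the Gaussian distribution N(0, Σ) satisfies the global Markov property with respect to G (equivalently, (Σ⁻¹)_{i,j} = 0 whenever i ≠ j and i − j is not an edge of G). Then for all distinct i, l ∈ K: Σ_{i,l} = Σ_{ρ ∈ π_{i,l}} Σ_{ρ_1,ρ_1} ∏_{n=2}^{|ρ|} β_{ρ_n,ρ_{n−1} | K∖{ρ_n,ρ_{n−1}}} · (Σ_{ρ_n,ρ_n | {ρ_1,…,ρ_{n−1}}} / Σ_{ρ_n,ρ_n | K∖{ρ_n}}), where π_{i,l} is the set of paths in G between i and l, each path ρ being written as a sequence of distinct nodes ρ_1 = l, …, ρ_{|ρ|} = i with consecutive nodes adjacent in G. -/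

import Mathlib

open Matrix MeasureTheory ProbabilityTheory

attribute [local instance] Classical.propDecidable

noncomputable section

variable {V : Type*}

/-- The submatrix of `S` with rows indexed by `X` and columns indexed by `Y`. -/
def msub (S : Matrix V V ℝ) (X Y : Finset V) : Matrix X Y ℝ :=
  Matrix.of fun i j => S i.1 j.1

/-- Conditional independence `X ⊥ Y | Z` for a centered Gaussian distribution with
positive definite covariance matrix `S`:  `Σ_{X,Y} − Σ_{X,Z} (Σ_{Z,Z})⁻¹ Σ_{Z,Y} = 0`. -/
def gaussCI [Fintype V] [DecidableEq V] (S : Matrix V V ℝ) (X Y Z : Finset V) : Prop :=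
  msub S X Y - msub S X Z * (msub S Z Z)⁻¹ * msub S Z Y = 0

/-- Pairwise disjointness of three sets. -/
def PDisj (X Y Z : Finset V) : Prop :=
  Disjoint X Y ∧ Disjoint X Z ∧ Disjoint Y Z

/-- Pairwise disjointness of four sets. -/
def PDisj4 (X Y W Z : Finset V) : Prop :=
  Disjoint X Y ∧ Disjoint X W ∧ Disjoint X Z ∧ Disjoint Y W ∧ Disjoint Y Z ∧ Disjoint W Z

/-- A graph with three kinds of edges: undirected (`undir`), solid directed (`solid`,
written `A → B`) and dashed directed (`dashed`, written `A ⇢ B`).  No axioms are imposed. -/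
structure PreGraph (V : Type*) where
  undir : V → V → Prop
  solid : V → V → Prop
  dashed : V → V → Prop

namespace PreGraph

variable (G : PreGraph V)

/-- There is an undirected edge between `a` and `b`. -/
def und (a b : V) : Prop := G.undir a b ∨ G.undir b a

/-- `a` and `b` are adjacent. -/
def adj (a b : V) : Prop :=
  G.und a b ∨ G.solid a b ∨ G.solid b a ∨ G.dashed a b ∨ G.dashed b a

/-- The edge between `a` and `b` is undirected or directed (solid or dashed) from `a` to `b`. -/
def fwd (a b : V) : Prop := G.und a b ∨ G.solid a b ∨ G.dashed a b

/-- A route in `G`: a sequence of nodes `nodes 0, nodes 1, …, nodes len` such that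
consecutive nodes are adjacent. -/
structure Route (G : PreGraph V) where
  len : ℕ
  nodes : ℕ → V
  adj_step : ∀ i < len, G.adj (nodes i) (nodes (i + 1))

/-- `c` is a collider node between `a` and `b`:  `a ⇢ c ⇠ b`, `a ⇢ c − b` (in either of the
two traversal directions) or `a ⇢ c ← b` (in either of the two traversal directions). -/
def colliderTriple (a c b : V) : Prop :=
  (G.dashed a c ∧ G.dashed b c) ∨
  (G.dashed a c ∧ G.und c b) ∨ (G.und a c ∧ G.dashed b c) ∨
  (G.dashed a c ∧ G.solid b c) ∨ (G.solid a c ∧ G.dashed b c)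

variable {G} in
/-- The node at position `k` of the route `ρ` is a collider node of `ρ`. -/
def Route.colliderNodeAt (ρ : G.Route) (k : ℕ) : Prop :=
  1 ≤ k ∧ k < ρ.len ∧ G.colliderTriple (ρ.nodes (k - 1)) (ρ.nodes k) (ρ.nodes (k + 1))

variable {G} in
/-- The positions `p, …, q` of `ρ` form a collider section of `ρ`, i.e. a maximal undirected
subroute `C1 − ⋯ − Cn` of `ρ` such that `A → C1 − ⋯ − Cn ← B` is a subroute of `ρ`. -/
def Route.colliderSectionOcc (ρ : G.Route) (p q : ℕ) : Prop :=
  1 ≤ p ∧ p ≤ q ∧ q + 1 ≤ ρ.len ∧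
  (∀ m, p ≤ m → m < q → G.und (ρ.nodes m) (ρ.nodes (m + 1))) ∧
  G.solid (ρ.nodes (p - 1)) (ρ.nodes p) ∧ G.solid (ρ.nodes (q + 1)) (ρ.nodes q)

variable {G} in
/-- The node at position `k` of `ρ` lies in a collider section of `ρ`. -/
def Route.inColliderSectionAt (ρ : G.Route) (k : ℕ) : Prop :=
  ∃ p q, ρ.colliderSectionOcc p q ∧ p ≤ k ∧ k ≤ q

variable {G} in
/-- The route `ρ` is `Z`-open: (i) all collider nodes are in `Z`, (ii) every collider
section contains some node of `Z`, and (iii) every node which is neither a collider node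
nor inside a collider section is outside `Z`. -/
def Route.IsZOpen (ρ : G.Route) (Z : Finset V) : Prop :=
  (∀ k, ρ.colliderNodeAt k → ρ.nodes k ∈ Z) ∧
  (∀ p q, ρ.colliderSectionOcc p q → ∃ m, p ≤ m ∧ m ≤ q ∧ ρ.nodes m ∈ Z) ∧
  (∀ k ≤ ρ.len, ¬ ρ.colliderNodeAt k → ¬ ρ.inColliderSectionAt k → ρ.nodes k ∉ Z)

variable {G} in
/-- A pure collider route (with at least one edge): every intermediate node is a collider
node or lies in a collider section of the route. -/
def Route.IsPureCollider (ρ : G.Route) : Prop :=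
  1 ≤ ρ.len ∧ ∀ k, 0 < k → k < ρ.len → ρ.colliderNodeAt k ∨ ρ.inColliderSectionAt k

/-- Separation `X ⊥_G Y | Z`: there is no `Z`-open route in `G` between a node of `X` and a
node of `Y`. -/
def Sep (X Y Z : Finset V) : Prop :=
  ¬ ∃ ρ : G.Route,
      ((ρ.nodes 0 ∈ X ∧ ρ.nodes ρ.len ∈ Y) ∨ (ρ.nodes 0 ∈ Y ∧ ρ.nodes ρ.len ∈ X)) ∧
      ρ.IsZOpen Z

section Finite

variable [Fintype V] [DecidableEq V]

/-- The fathers of `X`: nodes `b` with `b → a` in `G` for some `a ∈ X`. -/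
def fa (X : Finset V) : Finset V := Finset.univ.filter fun b => ∃ a ∈ X, G.solid b a

/-- The mothers of `X`: nodes `b` with `b ⇢ a` in `G` for some `a ∈ X`. -/
def mo (X : Finset V) : Finset V := Finset.univ.filter fun b => ∃ a ∈ X, G.dashed b a

/-- The parents of `X`. -/
def pa (X : Finset V) : Finset V := G.fa X ∪ G.mo X

/-- The neighbors of `X`: nodes `b` with `b − a` in `G` for some `a ∈ X`. -/
def nb (X : Finset V) : Finset V := Finset.univ.filter fun b => ∃ a ∈ X, G.und b a

/-- There is a descending route from `a` to `b`: all edges undirected or directed in the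
direction of travel, containing at least one directed edge. -/
def descends (a b : V) : Prop :=
  ∃ (n : ℕ) (f : ℕ → V), f 0 = a ∧ f n = b ∧ (∀ i < n, G.fwd (f i) (f (i + 1))) ∧
    ∃ i < n, G.solid (f i) (f (i + 1)) ∨ G.dashed (f i) (f (i + 1))

/-- The non-descendants of `X`. -/
def nd (X : Finset V) : Finset V := Finset.univ.filter fun b => ¬ ∃ a ∈ X, G.descends a b

/-- Connectivity by undirected routes. -/
def uconn : V → V → Prop := Relation.ReflTransGen G.und

/-- The chain component containing `i`. -/
def cc (i : V) : Finset V := Finset.univ.filter fun j => G.uconn i j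

/-- The set of chain components of `G`. -/
def ccs : Finset (Finset V) := Finset.univ.image G.cc

/-- The nodes incident to some edge of `G`. -/
def verts : Finset V := Finset.univ.filter fun a => ∃ b, G.adj a b

/-- `π` is a topological ordering of the chain components: it is constant on components and
increases along directed edges. -/
def IsTopoOrder (π : V → ℕ) : Prop :=
  (∀ a b, G.uconn a b → π a = π b) ∧ ∀ a b, G.solid a b ∨ G.dashed a b → π a < π b

/-- Equation 1: for every topological ordering of the chain components, each component `K`
is independent of the preceding components minus `Pa(K)` given `Pa(K)`. -/
def eq1 (S : Matrix V V ℝ) : Prop :=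
  ∀ π : V → ℕ, G.IsTopoOrder π → ∀ i : V,
    gaussCI S (G.cc i) ((Finset.univ.filter fun b => π b < π i) \ G.pa (G.cc i))
      (G.pa (G.cc i))

/-- The regression coefficients `β_K = Σ_{K,Pa(K)} (Σ_{Pa(K),Pa(K)})⁻¹`. -/
def beta (S : Matrix V V ℝ) (K : Finset V) : Matrix K (G.pa K) ℝ :=
  msub S K (G.pa K) * (msub S (G.pa K) (G.pa K))⁻¹

/-- The conditional covariance matrix `Λ_K`. -/
def lam (S : Matrix V V ℝ) (K : Finset V) : Matrix K K ℝ :=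
  msub S K K - msub S K (G.pa K) * (msub S (G.pa K) (G.pa K))⁻¹ * msub S (G.pa K) K

/-- The precision matrix `Ω = (Σ_{K ∪ Pa(K), K ∪ Pa(K)})⁻¹`. -/
def om (S : Matrix V V ℝ) (K : Finset V) : Matrix ↥(K ∪ G.pa K) ↥(K ∪ G.pa K) ℝ :=
  (msub S (K ∪ G.pa K) (K ∪ G.pa K))⁻¹

/-- Equation 6: `(β_K)_{i,j} = 0` for all `i ∈ K` and `j ∈ Mo(K) ∖ Mo(i)`. -/
def eq6 (S : Matrix V V ℝ) : Prop :=
  ∀ K ∈ G.ccs, ∀ i (hi : i ∈ K), ∀ j (hj : j ∈ G.pa K),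
    j ∈ G.mo K → j ∉ G.mo {i} → G.beta S K ⟨i, hi⟩ ⟨j, hj⟩ = 0

/-- Equation 7: `Ω_{i,j} = 0` for all `i ∈ K` and `j ∈ Fa(K) ∖ Fa(i)`. -/
def eq7 (S : Matrix V V ℝ) : Prop :=
  ∀ K ∈ G.ccs, ∀ i (hi : i ∈ K), ∀ j (hj : j ∈ G.pa K),
    j ∈ G.fa K → j ∉ G.fa {i} →
    G.om S K ⟨i, Finset.mem_union_left _ hi⟩ ⟨j, Finset.mem_union_right _ hj⟩ = 0

/-- Equation 8: `(Λ_K⁻¹)_{i,j} = 0` for all `i ∈ K` and `j ∈ K ∖ ({i} ∪ Ne(i))`. -/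
def eq8 (S : Matrix V V ℝ) : Prop :=
  ∀ K ∈ G.ccs, ∀ i (hi : i ∈ K), ∀ j (hj : j ∈ K),
    j ≠ i → j ∉ G.nb {i} → (G.lam S K)⁻¹ ⟨i, hi⟩ ⟨j, hj⟩ = 0

/-- `p` satisfies Equation 1 and the zero restrictions of Equations 6–8 w.r.t. `G`. -/
def eqs (S : Matrix V V ℝ) : Prop := G.eq1 S ∧ G.eq6 S ∧ G.eq7 S ∧ G.eq8 S

/-- The global Markov property with respect to `G`, for an abstract ternary
(conditional-independence) relation `I`. -/
def globalMP (I : Finset V → Finset V → Finset V → Prop) : Prop :=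
  ∀ X Y Z : Finset V, PDisj X Y Z → G.Sep X Y Z → I X Y Z

/-- The block-recursive Markov property (B1)–(B3) with respect to `G`. -/
def blockRecMP (I : Finset V → Finset V → Finset V → Prop) : Prop :=
  ∀ K ∈ G.ccs, ∀ i ∈ K,
    I {i} (((G.nd K \ K) \ G.fa K) \ G.mo {i}) (G.fa K ∪ G.mo {i}) ∧
    I {i} (((G.nd K \ K) \ G.fa {i}) \ G.mo K) ((K \ {i}) ∪ G.fa {i} ∪ G.mo K) ∧
    ∀ j ∈ K, j ≠ i → j ∉ G.nb {i} → I {i} {j} ((K \ {i, j}) ∪ G.pa K)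

/-- The pairwise Markov property (P1)–(P2) with respect to `G`. -/
def pairwiseMP (I : Finset V → Finset V → Finset V → Prop) : Prop :=
  ∀ i j : V, i ≠ j → ¬ G.adj i j → ∀ K ∈ G.ccs, i ∈ K →
    (j ∈ ((G.nd {i} \ K) \ G.fa K) \ G.mo {i} → I {i} {j} ((G.nd {i} \ K) \ {j})) ∧
    (j ∈ ((G.nd {i} \ {i}) \ G.fa {i}) \ G.mo K → I {i} {j} (G.nd {i} \ {i, j}))

/-- The local Markov property (L1)–(L2) with respect to `G`. -/
def localMP (I : Finset V → Finset V → Finset V → Prop) : Prop :=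
  ∀ K ∈ G.ccs, ∀ i ∈ K,
    I {i} (((G.nd {i} \ K) \ G.fa K) \ G.mo {i}) (G.fa K ∪ G.mo {i}) ∧
    I {i} ((((G.nd {i} \ {i}) \ G.pa {i}) \ G.nb {i}) \ G.mo (G.nb {i}))
      (G.pa {i} ∪ G.nb {i} ∪ G.mo (G.nb {i}))

/-- The subgraph `G^U`: it keeps the edge `A ⊸ B` (with its type and orientation) iff `G`
has a route `A ⊸ B ⊸ ⋯ ⊸ C` with `C ∈ U`, all edges undirected or directed in the
direction of travel, and no subroute `R ⇢ S − T`. -/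
def goodFrom (U : Finset V) (a b : V) : Prop :=
  ∃ (f : ℕ → V) (n : ℕ), 1 ≤ n ∧ f 0 = a ∧ f 1 = b ∧ f n ∈ U ∧
    (∀ i < n, G.fwd (f i) (f (i + 1))) ∧
    ∀ i, i + 2 ≤ n → ¬ (G.dashed (f i) (f (i + 1)) ∧ G.und (f (i + 1)) (f (i + 2)))

/-- The graph `G^U`. -/
def derived (U : Finset V) : PreGraph V where
  undir a b := G.undir a b ∧ G.goodFrom U a b
  solid a b := G.solid a b ∧ G.goodFrom U a b
  dashed a b := G.dashed a b ∧ G.goodFrom U a b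

/-- The set `Y'` used in Lemmas 2 and 3:
`Y' = {B' ∈ V(G^{X∪Y∪Z}) ∖ (X ∪ Z) : X ⊥_{G^{X∪Y∪Z}} B' | Z}`. -/
def derivedYp (X Y Z : Finset V) : Finset V :=
  ((G.derived (X ∪ Y ∪ Z)).verts \ (X ∪ Z)).filter fun b =>
    (G.derived (X ∪ Y ∪ Z)).Sep X {b} Z

/-- The set `X' = V(G^{X∪Y∪Z}) ∖ (Y' ∪ Z)` used in Lemmas 2 and 3. -/
def derivedXp (X Y Z : Finset V) : Finset V :=
  (G.derived (X ∪ Y ∪ Z)).verts \ (G.derivedYp X Y Z ∪ Z)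

end Finite

end PreGraph

/-- A chain graph: at most one edge between any pair of distinct nodes (undirected, solid
directed, or dashed directed) and no semidirected cycles. -/
structure ChainGraph (V : Type*) extends PreGraph V where
  undir_symm : ∀ a b, toPreGraph.undir a b → toPreGraph.undir b a
  undir_irrefl : ∀ a, ¬ toPreGraph.undir a a
  solid_irrefl : ∀ a, ¬ toPreGraph.solid a a
  dashed_irrefl : ∀ a, ¬ toPreGraph.dashed a a
  undir_not_solid : ∀ a b, toPreGraph.undir a b → ¬ toPreGraph.solid a b
  undir_not_dashed : ∀ a b, toPreGraph.undir a b → ¬ toPreGraph.dashed a b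
  solid_not_solid : ∀ a b, toPreGraph.solid a b → ¬ toPreGraph.solid b a
  solid_not_dashed : ∀ a b, toPreGraph.solid a b → ¬ toPreGraph.dashed a b
  solid_not_dashed_rev : ∀ a b, toPreGraph.solid a b → ¬ toPreGraph.dashed b a
  dashed_not_dashed : ∀ a b, toPreGraph.dashed a b → ¬ toPreGraph.dashed b a
  no_semidirected_cycle : ¬ ∃ (f : ℕ → V) (n : ℕ), 1 ≤ n ∧ f n = f 0 ∧
    (toPreGraph.solid (f 0) (f 1) ∨ toPreGraph.dashed (f 0) (f 1)) ∧
    ∀ i < n, toPreGraph.fwd (f i) (f (i + 1))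

namespace ChainGraph

variable (G : ChainGraph V)

/-- An LWF chain graph: no dashed directed edges. -/
def IsLWF : Prop := ∀ a b, ¬ G.toPreGraph.dashed a b

/-- An AMP chain graph: no solid directed edges. -/
def IsAMP : Prop := ∀ a b, ¬ G.toPreGraph.solid a b

/-- A unified chain graph: `Fa(K) ∩ Mo(K) = ∅` for every chain component `K`. -/
def IsUCG [Fintype V] [DecidableEq V] : Prop :=
  ∀ K ∈ G.toPreGraph.ccs, Disjoint (G.toPreGraph.fa K) (G.toPreGraph.mo K)

end ChainGraph


/-- The AMP chain graph obtained from `G` by deleting every solid directed edge. -/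
def ChainGraph.dropSolid (G : ChainGraph V) : ChainGraph V where
  undir := G.toPreGraph.undir
  solid _ _ := False
  dashed := G.toPreGraph.dashed
  undir_symm := G.undir_symm
  undir_irrefl := G.undir_irrefl
  solid_irrefl _ h := h
  dashed_irrefl := G.dashed_irrefl
  undir_not_solid _ _ _ h := h
  undir_not_dashed := G.undir_not_dashed
  solid_not_solid _ _ h := h.elim
  solid_not_dashed _ _ h := h.elim
  solid_not_dashed_rev _ _ h := h.elim
  dashed_not_dashed := G.dashed_not_dashed
  no_semidirected_cycle := fun ⟨f, n, hn, hcyc, hstart, hsteps⟩ =>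
    G.no_semidirected_cycle ⟨f, n, hn, hcyc, Or.inr (hstart.resolve_left id),
      fun i hi => (hsteps i hi).imp id (Or.imp False.elim id)⟩

/-- The restriction of `ω : V → ℝ` to the coordinates in `S`. -/
def marg (S : Finset V) : (V → ℝ) → (S → ℝ) := fun ω s => ω s.1

lemma marg_measurable (S : Finset V) : Measurable (marg (V := V) S) :=
  measurable_pi_lambda _ fun s => measurable_pi_apply s.1

/-- Conditional independence of the coordinate tuples indexed by `X` and `Y` given the
coordinate tuple indexed by `Z`, for a distribution `μ` on `ℝ^V`. -/
def mCI [Fintype V] (μ : Measure (V → ℝ)) [IsFiniteMeasure μ] (X Y Z : Finset V) : Prop :=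
  CondIndepFun (MeasurableSpace.comap (marg Z) inferInstance) ((marg_measurable Z).comap_le)
    (marg X) (marg Y) μ

/-- A probability distribution `μ` on `ℝ^V` satisfies the global Markov property with
respect to `G`. -/
def measGlobalMarkov [Fintype V] [DecidableEq V] (G : PreGraph V) (μ : Measure (V → ℝ))
    [IsFiniteMeasure μ] : Prop :=
  ∀ X Y Z : Finset V, PDisj X Y Z → G.Sep X Y Z → mCI μ X Y Z

/-- A graphoid over `V`: a ternary relation on pairwise disjoint subsets of `V` satisfying
symmetry, decomposition, weak union, contraction and intersection. -/
structure Graphoid (V : Type*) [DecidableEq V] where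
  rel : Finset V → Finset V → Finset V → Prop
  symmetry : ∀ X Y Z : Finset V, PDisj X Y Z → rel X Y Z → rel Y X Z
  decomposition : ∀ X Y W Z : Finset V, PDisj4 X Y W Z → rel X (Y ∪ W) Z → rel X Y Z
  weakUnion : ∀ X Y W Z : Finset V, PDisj4 X Y W Z → rel X (Y ∪ W) Z → rel X Y (Z ∪ W)
  contraction : ∀ X Y W Z : Finset V, PDisj4 X Y W Z →
    rel X Y (Z ∪ W) → rel X W Z → rel X (Y ∪ W) Z
  intersection : ∀ X Y W Z : Finset V, PDisj4 X Y W Z →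
    rel X Y (Z ∪ W) → rel X W (Z ∪ Y) → rel X (Y ∪ W) Z

/-- The conditional variance `Σ_{a,a|B} = Σ_{a,a} − Σ_{a,B} (Σ_{B,B})⁻¹ Σ_{B,a}`. -/
def condVar [Fintype V] [DecidableEq V] (S : Matrix V V ℝ) (a : V) (B : Finset V) : ℝ :=
  S a a - ∑ b₁ : B, ∑ b₂ : B, S a b₁.1 * (msub S B B)⁻¹ b₁ b₂ * S b₂.1 a

/-! Write `Σ_B` for the Schur complement of `Σ` with respect to `B`. For `B ⊆ C` one has
`Σ_C Σ⁻¹ Σ_B = Σ_C`, and `Σ_C Σ⁻¹` agrees with the identity in the columns outside `C`. Reading off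
the entry `(i, l)` for `C = B ∪ {l}`, where `Σ_C` vanishes in column `l`, gives the first-step
recursion `(Σ_B)_{i,l} = (Σ_B)_{l,l} ∑_{j ∉ C} (-Σ⁻¹)_{j,l} (Σ_C)_{i,j}`. Iterating it from `B = ∅`
expands `Σ_{i,l}` over all sequences of distinct nodes from `l` to `i`; a sequence that is not a
path of the graph has a vanishing edge factor. As `Σ_{a,a|K∖{a}} = 1 / (Σ⁻¹)_{a,a}`, dividing by it
turns the partial regression coefficient into the edge factor `-Σ⁻¹`. -/

section SchurComplement

variable {R : Type*}

/-- The principal submatrix of `S` on `B`: the block `Σ_{B,B}`. -/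
abbrev principalSubmatrix (S : Matrix V V R) (B : Finset V) : Matrix B B R :=
  S.submatrix Subtype.val Subtype.val

variable [CommRing R] [DecidableEq V] {S : Matrix V V R} {B C : Finset V} {i j : V}

/-- The Schur complement of the principal submatrix of `S` on `B`, indexed by all of `V` and not
only by `Bᶜ`: its rows and columns in `B` vanish when that submatrix is invertible. For a covariance
matrix `Σ` its entries are the conditional covariances `Σ_{i,j|B}`. -/
def schurCompl (S : Matrix V V R) (B : Finset V) : Matrix V V R :=
  S - S.submatrix id (Subtype.val : B → V) * (principalSubmatrix S B)⁻¹ *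
    S.submatrix (Subtype.val : B → V) id

lemma schurCompl_empty (S : Matrix V V R) : schurCompl S ∅ = S := by
  ext i j
  simp [schurCompl, mul_apply]

lemma schurCompl_apply_of_mem_left (hB : IsUnit (principalSubmatrix S B)) (hi : i ∈ B) :
    schurCompl S B i j = 0 := by
  have hrows : (schurCompl S B).submatrix (Subtype.val : B → V) id = 0 := by
    simp [schurCompl, submatrix_sub, submatrix_mul _ _ _ id _ Function.bijective_id,
      mul_nonsing_inv _ ((isUnit_iff_isUnit_det _).mp hB)]
  exact congrFun₂ hrows ⟨i, hi⟩ j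

lemma schurCompl_apply_of_mem_right (hB : IsUnit (principalSubmatrix S B)) (hj : j ∈ B) :
    schurCompl S B i j = 0 := by
  have hcols : (schurCompl S B).submatrix id (Subtype.val : B → V) = 0 := by
    simp [schurCompl, submatrix_sub, submatrix_mul _ _ _ id _ Function.bijective_id,
      Matrix.mul_assoc, nonsing_inv_mul _ ((isUnit_iff_isUnit_det _).mp hB)]
  exact congrFun₂ hcols i ⟨j, hj⟩

variable [Fintype V]

lemma schurCompl_mul_inv_apply_of_notMem (hS : IsUnit S) (hj : j ∉ B) :
    (schurCompl S B * S⁻¹) i j = (1 : Matrix V V R) i j := by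
  have hinv : S * S⁻¹ = 1 := mul_nonsing_inv _ ((isUnit_iff_isUnit_det _).mp hS)
  have hrows : S.submatrix (Subtype.val : B → V) id * S⁻¹ =
      (1 : Matrix V V R).submatrix Subtype.val id := by
    rw [← hinv, submatrix_mul _ _ _ id _ Function.bijective_id, submatrix_id_id]
  rw [schurCompl, Matrix.sub_mul, Matrix.mul_assoc, hrows, hinv, Matrix.sub_apply,
    sub_eq_self, mul_apply]
  refine Finset.sum_eq_zero fun b _ => ?_
  rw [submatrix_apply, id, one_apply_ne (ne_of_mem_of_not_mem b.2 hj), mul_zero]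

lemma schurCompl_mul_inv_mul_schurCompl (hS : IsUnit S) (hC : IsUnit (principalSubmatrix S C))
    (hBC : B ⊆ C) : schurCompl S C * S⁻¹ * schurCompl S B = schurCompl S C := by
  have hinv : S⁻¹ * S = 1 := nonsing_inv_mul _ ((isUnit_iff_isUnit_det _).mp hS)
  have hcols : schurCompl S C * S⁻¹ * S.submatrix id (Subtype.val : B → V) = 0 := by
    ext i b
    calc (schurCompl S C * S⁻¹ * S) i b = schurCompl S C i b := by
          rw [Matrix.mul_assoc, hinv, Matrix.mul_one]
      _ = 0 := schurCompl_apply_of_mem_right hC (hBC b.2)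
  rw [schurCompl.eq_def S B, Matrix.mul_sub, ← Matrix.mul_assoc, ← Matrix.mul_assoc, hcols,
    Matrix.zero_mul, Matrix.zero_mul, sub_zero, Matrix.mul_assoc, hinv, Matrix.mul_one]

lemma schurCompl_apply_eq_mul_sum (hS : IsUnit S) (hB : IsUnit (principalSubmatrix S B))
    (hjB : IsUnit (principalSubmatrix S (insert j B))) (hi : i ∉ insert j B) :
    schurCompl S B i j = schurCompl S B j j *
      ∑ k ∈ (insert j B)ᶜ, -S⁻¹ k j * schurCompl S (insert j B) i k := by
  set M := schurCompl S (insert j B) * S⁻¹ with hM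
  have hM_one {k : V} (hk : k ∉ insert j B) : M i k = (1 : Matrix V V R) i k :=
    schurCompl_mul_inv_apply_of_notMem hS hk
  have hMj : M i j = -∑ k ∈ (insert j B)ᶜ, -S⁻¹ k j * schurCompl S (insert j B) i k := by
    have hsupp : ∀ k ∉ (insert j B)ᶜ, schurCompl S (insert j B) i k * S⁻¹ k j = 0 := fun k hk => by
      rw [schurCompl_apply_of_mem_right hjB (Finset.notMem_compl.mp hk), zero_mul]
    rw [hM, mul_apply, ← Finset.sum_subset (Finset.subset_univ _) fun k _ => hsupp k,
      ← Finset.sum_neg_distrib]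
    exact Finset.sum_congr rfl fun k _ => by ring
  have hM_zero : (M * schurCompl S B) i j = 0 := by
    rw [schurCompl_mul_inv_mul_schurCompl hS hjB (Finset.subset_insert j B)]
    exact schurCompl_apply_of_mem_right hjB (Finset.mem_insert_self j B)
  have hM_expand : (M * schurCompl S B) i j =
      schurCompl S B i j + M i j * schurCompl S B j j := by
    have hne : i ≠ j := fun h => hi (h ▸ Finset.mem_insert_self j B)
    rw [mul_apply, Fintype.sum_eq_add i j hne, hM_one hi, one_apply_eq, one_mul]
    rintro k ⟨hki, hkj⟩
    by_cases hk : k ∈ B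
    · rw [schurCompl_apply_of_mem_left hB hk, mul_zero]
    · rw [hM_one (by simp [hkj, hk]), one_apply_ne hki.symm, zero_mul]
  rw [hMj] at hM_expand
  linear_combination hM_zero - hM_expand

lemma schurCompl_erase_mul_inv_apply_self (hS : IsUnit S)
    (hi : IsUnit (principalSubmatrix S (Finset.univ.erase i))) :
    schurCompl S (Finset.univ.erase i) i i * S⁻¹ i i = 1 := by
  rw [← one_apply_eq (α := R) i, ← schurCompl_mul_inv_apply_of_notMem hS (Finset.notMem_erase i _),
    mul_apply, Fintype.sum_eq_single i]
  intro k hk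
  rw [schurCompl_apply_of_mem_right hi (by simp [hk]), zero_mul]

lemma isUnit_of_principalSubmatrix_univ (h : IsUnit (principalSubmatrix S Finset.univ)) :
    IsUnit S :=
  (isUnit_submatrix_equiv (Equiv.subtypeUnivEquiv Finset.mem_univ)
    (Equiv.subtypeUnivEquiv Finset.mem_univ)).mp h

end SchurComplement

section PathEnumeration

variable [Fintype V] [DecidableEq V] {B : Finset V} {n : ℕ} {i l : V}

/-- The paths of the complete graph from `l` to `i` with `n` edges that avoid `B`, as sequences of
distinct nodes. -/
def avoidingPaths (B : Finset V) (n : ℕ) (l i : V) : Finset (Fin (n + 1) → V) :=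
  Finset.univ.filter fun f =>
    Function.Injective f ∧ f 0 = l ∧ f (Fin.last n) = i ∧ ∀ k, f k ∉ B

lemma mem_avoidingPaths {f : Fin (n + 1) → V} : f ∈ avoidingPaths B n l i ↔
    Function.Injective f ∧ f 0 = l ∧ f (Fin.last n) = i ∧ ∀ k, f k ∉ B :=
  Finset.mem_filter_univ f

lemma avoidingPaths_of_mem (hi : i ∈ B) (n : ℕ) (l : V) : avoidingPaths B n l i = ∅ :=
  Finset.filter_eq_empty_iff.mpr fun _ _ ⟨_, _, hlast, hB⟩ => hB (Fin.last n) (hlast ▸ hi)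

lemma avoidingPaths_zero_self (hl : l ∉ B) : avoidingPaths B 0 l l = {fun _ => l} := by
  ext f
  rw [mem_avoidingPaths, Finset.mem_singleton]
  constructor
  · rintro ⟨-, hfirst, -⟩
    exact funext fun k => by rw [Fin.fin_one_eq_zero k, hfirst]
  · rintro rfl
    exact ⟨fun a b _ => (Fin.fin_one_eq_zero a).trans (Fin.fin_one_eq_zero b).symm, rfl, rfl,
      fun _ => hl⟩

lemma avoidingPaths_zero_of_ne (h : l ≠ i) : avoidingPaths B 0 l i = ∅ :=
  Finset.filter_eq_empty_iff.mpr fun _ _ ⟨_, hfirst, hlast, _⟩ => h (hfirst.symm.trans hlast)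

lemma cons_mem_avoidingPaths (hl : l ∉ B) {g : Fin (n + 1) → V} :
    (Fin.cons l g : Fin (n + 2) → V) ∈ avoidingPaths B (n + 1) l i ↔
      g ∈ avoidingPaths (insert l B) n (g 0) i := by
  simp only [mem_avoidingPaths, Fin.cons_injective_iff, Fin.cons_zero,
    ← Fin.succ_last, Fin.cons_succ, Fin.forall_fin_succ (n := n + 1), Finset.mem_insert,
    Set.mem_range, not_exists, not_or, forall_and, true_and]
  tauto

lemma sum_avoidingPaths_succ {M : Type*} [AddCommMonoid M] (F : (Fin (n + 2) → V) → M)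
    (hl : l ∉ B) :
    ∑ f ∈ avoidingPaths B (n + 1) l i, F f =
      ∑ j ∈ (insert l B)ᶜ, ∑ g ∈ avoidingPaths (insert l B) n j i, F (Fin.cons l g) := by
  have hcons {f : Fin (n + 2) → V} (hf : f ∈ avoidingPaths B (n + 1) l i) :
      Fin.cons l (Fin.tail f) = f := by
    rw [← (mem_avoidingPaths.mp hf).2.1, Fin.cons_self_tail]
  have htail {f : Fin (n + 2) → V} (hf : f ∈ avoidingPaths B (n + 1) l i) :
      Fin.tail f ∈ avoidingPaths (insert l B) n (f 1) i :=
    (cons_mem_avoidingPaths hl).mp ((hcons hf).symm ▸ hf)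
  have hsecond : ∀ f ∈ avoidingPaths B (n + 1) l i, f 1 ∈ (insert l B)ᶜ := fun f hf =>
    Finset.mem_compl.mpr ((mem_avoidingPaths.mp (htail hf)).2.2.2 0)
  rw [← Finset.sum_fiberwise_of_maps_to hsecond]
  refine Finset.sum_congr rfl fun j _ =>
    Finset.sum_nbij' Fin.tail (fun g => Fin.cons l g) ?_ ?_ ?_ ?_ ?_
  · intro f hf
    obtain ⟨hpath, rfl⟩ := Finset.mem_filter.mp hf
    exact htail hpath
  · intro g hg
    obtain rfl : g 0 = j := (mem_avoidingPaths.mp hg).2.1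
    exact Finset.mem_filter.mpr ⟨(cons_mem_avoidingPaths hl).mpr hg, rfl⟩
  · exact fun f hf => hcons (Finset.mem_filter.mp hf).1
  · exact fun g _ => Fin.tail_cons (α := fun _ => V) l g
  · exact fun f hf => by rw [hcons (Finset.mem_filter.mp hf).1]

end PathEnumeration

section PathExpansion

variable {R : Type*} [CommSemiring R] [DecidableEq V]

/-- The weight of the node sequence `f` for node weights `m C a a` and edge weights `w`, where `C`
consists of `B` and the nodes of `f` before `a`. -/
def pathWeight (m : Finset V → Matrix V V R) (w : Matrix V V R) (B : Finset V) {n : ℕ}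
    (f : Fin (n + 1) → V) : R :=
  m B (f 0) (f 0) * ∏ k : Fin n, w (f k.succ) (f k.castSucc) *
    m (B ∪ (Finset.univ.filter fun q : Fin (n + 1) => q ≤ k.castSucc).image f)
      (f k.succ) (f k.succ)

lemma pathWeight_cons (m : Finset V → Matrix V V R) (w : Matrix V V R) (B : Finset V) {n : ℕ}
    (l : V) (g : Fin (n + 1) → V) :
    pathWeight m w B (Fin.cons l g : Fin (n + 2) → V) =
      m B l l * (w (g 0) l * pathWeight m w (insert l B) g) := by
  have hfirst : B ∪ (Finset.univ.filter fun q : Fin (n + 2) => q ≤ (0 : Fin (n + 1)).castSucc).image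
      (Fin.cons l g : Fin (n + 2) → V) = insert l B := by
    ext x
    simp [eq_comm, or_comm]
  have hlater (k : Fin n) :
      B ∪ (Finset.univ.filter fun q : Fin (n + 2) => q ≤ k.succ.castSucc).image
          (Fin.cons l g : Fin (n + 2) → V) =
        insert l B ∪ (Finset.univ.filter fun q : Fin (n + 1) => q ≤ k.castSucc).image g := by
    ext x
    simp [Fin.exists_fin_succ, eq_comm, or_left_comm]
  simp only [pathWeight, Fin.prod_univ_succ (n := n), hfirst, hlater]
  simp only [Fin.castSucc_zero, ← Fin.succ_castSucc, Fin.cons_succ, Fin.cons_zero]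
  ring

lemma adj_of_pathWeight_ne_zero {G : SimpleGraph V} {m : Finset V → Matrix V V R} {w : Matrix V V R}
    (hw : ∀ a b, a ≠ b → ¬ G.Adj a b → w a b = 0) {B : Finset V} {n : ℕ} {f : Fin (n + 1) → V}
    (hf : Function.Injective f) (hne : pathWeight m w B f ≠ 0) (k : Fin n) :
    G.Adj (f k.castSucc) (f k.succ) := by
  by_contra hadj
  have hzero : w (f k.succ) (f k.castSucc) = 0 :=
    hw _ _ (hf.ne k.castSucc_lt_succ.ne') fun h => hadj h.symm
  exact hne (by rw [pathWeight, Finset.prod_eq_zero (Finset.mem_univ k) (by rw [hzero, zero_mul]),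
    mul_zero])

lemma sum_pathWeight_succ [Fintype V] (m : Finset V → Matrix V V R) (w : Matrix V V R)
    {B : Finset V} (n : ℕ) (i : V) {l : V} (hl : l ∉ B) :
    ∑ f ∈ avoidingPaths B (n + 1) l i, pathWeight m w B f =
      m B l l * ∑ j ∈ (insert l B)ᶜ, w j l *
        ∑ g ∈ avoidingPaths (insert l B) n j i, pathWeight m w (insert l B) g := by
  simp only [sum_avoidingPaths_succ _ hl, pathWeight_cons, Finset.mul_sum]
  refine Finset.sum_congr rfl fun j _ => Finset.sum_congr rfl fun g hg => ?_
  rw [(mem_avoidingPaths.mp hg).2.1]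

lemma eq_sum_pathWeight_of_recursion [Fintype V] {m : Finset V → Matrix V V R} {w : Matrix V V R}
    (hm : ∀ (B : Finset V) (i l : V), i ∉ insert l B →
      m B i l = m B l l * ∑ j ∈ (insert l B)ᶜ, w j l * m (insert l B) i j)
    {B : Finset V} {i l : V} (hi : i ∉ B) (hl : l ∉ B) :
    m B i l = ∑ n ∈ Finset.range Bᶜ.card, ∑ f ∈ avoidingPaths B n l i, pathWeight m w B f := by
  induction hN : Bᶜ.card generalizing B l with
  | zero => exact absurd (Finset.mem_compl.mpr hl) (by simp [Finset.card_eq_zero.mp hN])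
  | succ N ih =>
    simp only [Finset.sum_range_succ', sum_pathWeight_succ m w _ i hl]
    by_cases hil : i = l
    · subst hil
      simp [avoidingPaths_of_mem, avoidingPaths_zero_self hl, pathWeight]
    have hi' : i ∉ insert l B := by simp [hil, hi]
    have hcard : (insert l B)ᶜ.card = N := by
      rw [Finset.compl_insert, Finset.card_erase_of_mem (Finset.mem_compl.mpr hl), hN,
        Nat.add_sub_cancel]
    rw [avoidingPaths_zero_of_ne (Ne.symm hil), Finset.sum_empty, add_zero, hm B i l hi',
      ← Finset.mul_sum, Finset.sum_comm]
    simp only [← Finset.mul_sum]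
    congr 1
    refine Finset.sum_congr rfl fun j hj => ?_
    rw [ih hi' (Finset.mem_compl.mp hj) hcard]

end PathExpansion

theorem apply_eq_sum_pathWeight_schurCompl {R : Type*} [CommRing R] [Fintype V] [DecidableEq V]
    {S : Matrix V V R} (hS : ∀ B : Finset V, IsUnit (principalSubmatrix S B)) (i l : V) :
    S i l = ∑ n ∈ Finset.range (Fintype.card V), ∑ f ∈ avoidingPaths ∅ n l i,
      pathWeight (schurCompl S) (-S⁻¹) ∅ f := by
  have hunit : IsUnit S := isUnit_of_principalSubmatrix_univ (hS _)
  have h := eq_sum_pathWeight_of_recursion (m := schurCompl S) (w := -S⁻¹)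
    (fun B i l hi => schurCompl_apply_eq_mul_sum hunit (hS B) (hS (insert l B)) hi)
    (Finset.notMem_empty i) (Finset.notMem_empty l)
  rwa [schurCompl_empty, Finset.compl_empty, Finset.card_univ] at h

lemma neg_inv_div_mul_div_schurCompl_erase {𝕜 : Type*} [Field 𝕜] [Fintype V] [DecidableEq V]
    {S : Matrix V V 𝕜} (hS : IsUnit S) {a : V}
    (ha : IsUnit (principalSubmatrix S (Finset.univ.erase a))) (b : V) (c : 𝕜) :
    -S⁻¹ a b / S⁻¹ a a * (c / schurCompl S (Finset.univ.erase a) a a) = -S⁻¹ a b * c := by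
  rw [div_mul_div_comm, mul_comm (S⁻¹ a a), schurCompl_erase_mul_inv_apply_self hS ha, div_one]

lemma condVar_eq_schurCompl [Fintype V] [DecidableEq V] (S : Matrix V V ℝ) (a : V)
    (B : Finset V) : condVar S a B = schurCompl S B a a := by
  have hblock : msub S B B = principalSubmatrix S B := rfl
  rw [schurCompl, Matrix.mul_assoc]
  simp [_root_.condVar, hblock, mul_apply, Finset.mul_sum, mul_assoc]

theorem covariance_path_decomposition_general
    {V 𝕜 : Type*} [Fintype V] [DecidableEq V] [Field 𝕜]
    (S : Matrix V V 𝕜) (hS : ∀ B : Finset V, IsUnit (principalSubmatrix S B)) (G : SimpleGraph V)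
    (hMarkov : ∀ i j : V, i ≠ j → ¬ G.Adj i j → S⁻¹ i j = 0) (i l : V) :
    S i l =
      ∑ n ∈ Finset.range (Fintype.card V),
        ∑ f ∈ (Finset.univ : Finset (Fin (n + 1) → V)).filter (fun f =>
            Function.Injective f ∧ f 0 = l ∧ f (Fin.last n) = i ∧
            ∀ k : Fin n, G.Adj (f k.castSucc) (f k.succ)),
          S (f 0) (f 0) *
            ∏ k : Fin n,
              (-(S⁻¹ (f k.succ) (f k.castSucc)) / S⁻¹ (f k.succ) (f k.succ)) *
              (schurCompl S ((Finset.univ.filter fun m : Fin (n + 1) => m ≤ k.castSucc).image f)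
                  (f k.succ) (f k.succ) /
                schurCompl S (Finset.univ.erase (f k.succ)) (f k.succ) (f k.succ)) := by
  have hpaths (n : ℕ) : (Finset.univ : Finset (Fin (n + 1) → V)).filter (fun f =>
      Function.Injective f ∧ f 0 = l ∧ f (Fin.last n) = i ∧
        ∀ k : Fin n, G.Adj (f k.castSucc) (f k.succ)) =
      (avoidingPaths ∅ n l i).filter fun f => ∀ k : Fin n, G.Adj (f k.castSucc) (f k.succ) := by
    ext f
    simp [mem_avoidingPaths, and_assoc]
  have hunit : IsUnit S := isUnit_of_principalSubmatrix_univ (hS _)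
  have hedge : ∀ a b, a ≠ b → ¬ G.Adj a b → (-S⁻¹) a b = 0 := fun a b hab hadj =>
    neg_eq_zero.mpr (hMarkov a b hab hadj)
  rw [apply_eq_sum_pathWeight_schurCompl hS i l]
  refine Finset.sum_congr rfl fun n _ => ?_
  have hadj : ∀ f ∈ avoidingPaths ∅ n l i, pathWeight (schurCompl S) (-S⁻¹) ∅ f ≠ 0 →
      ∀ k : Fin n, G.Adj (f k.castSucc) (f k.succ) := fun f hf hne =>
    adj_of_pathWeight_ne_zero hedge (mem_avoidingPaths.mp hf).1 hne
  rw [hpaths, ← Finset.sum_filter_of_ne hadj]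
  simp only [neg_inv_div_mul_div_schurCompl_erase hunit (hS _), pathWeight, schurCompl_empty,
    Finset.empty_union, Matrix.neg_apply]

/-- **Lemma 6 (covariance decomposition).** For a Gaussian distribution with positive
definite covariance `Σ` satisfying the global Markov property with respect to an
undirected graph `G` over `K`, the covariance `Σ_{i,l}` is a sum, over all paths of `G`
between `l` and `i`, of products of partial regression coefficients and inflation
factors. -/
theorem covariance_path_decomposition
    {V : Type*} [Fintype V] [DecidableEq V]
    (S : Matrix V V ℝ) (hS : S.PosDef) (G : SimpleGraph V)
    (hMarkov : ∀ i j : V, i ≠ j → ¬ G.Adj i j → S⁻¹ i j = 0)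
    (i l : V) (hil : i ≠ l) :
    S i l =
      ∑ n ∈ Finset.range (Fintype.card V),
        ∑ f ∈ (Finset.univ : Finset (Fin (n + 1) → V)).filter (fun f =>
            Function.Injective f ∧ f 0 = l ∧ f (Fin.last n) = i ∧
            ∀ k : Fin n, G.Adj (f k.castSucc) (f k.succ)),
          S (f 0) (f 0) *
            ∏ k : Fin n,
              (-(S⁻¹ (f k.succ) (f k.castSucc)) / S⁻¹ (f k.succ) (f k.succ)) *
              (condVar S (f k.succ)
                  ((Finset.univ.filter fun m : Fin (n + 1) => m ≤ k.castSucc).image f) /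
                condVar S (f k.succ) (Finset.univ.erase (f k.succ))) := by
  simpa only [condVar_eq_schurCompl] using covariance_path_decomposition_general S
    (fun _ => (hS.submatrix Subtype.val_injective).isUnit) G hMarkov i l
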